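/- arXiv:2501.12014 — 5 statements merged into one kernel-verified Lean document; each statement's English description precedes it below -/
import Mathlib

section
/- Let X be a V-category. Define μ_X : D(DX) → DX by μ_X(Φ)(x) := Φ(y_X(x)) and D y_X : DX → D(DX) by (D y_X)(φ)(ψ) := ⨆_x DX(ψ, y_X(x)) ⊗ φ(x). Then μ_X(Φ) and (D y_X)(φ) are again presheaves, and for all φ ∈ DX and Φ ∈ D(DX): (i) D(DX)((D y_X)(φ), Φ) = DX(φ, μ_X(Φ)); (ii) DX(μ_X(Φ), φ) = D(DX)(Φ, y_{DX}(φ)), where y_{DX}(φ) = DX(·,φ). Thus D y_X ⊣ μ_X ⊣ y_{DX} is an adjoint string, exhibiting the free cocompletion monad as a KZ-monad and DX as a completely distributive cocomplete V-category. -/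
/-!
By the adjunction `u * v ≤ w ↔ u ≤ [v,w]`, an element lies below `pshHom φ ψ` iff multiplying it
with `φ x` lands below `ψ x` for every `x`. Both identities are proved by comparing the lower sets
of the two sides; apart from this adjunction the main input is the Yoneda lemma
`DX(y x, ψ) = ψ x`. For (i), one direction evaluates at `ψ = y x`, where `1 ≤ DX(y x, y x)`, and the
other uses that `Φ` is a presheaf. For (ii), the presheaf law of `Φ` at `y x`, `ψ` reads
`ψ x * Φ ψ ≤ Φ (y x)` by Yoneda, and conversely one evaluates at `ψ = y x`.
-/

/- `V` is a commutative quantale: a complete lattice with a commutative monoid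
structure `(*, 1)` distributing over arbitrary suprema. -/
variable {V : Type*} [CommMonoid V] [CompleteLattice V] [IsQuantale V]

/-- The internal hom `[v,w]` of the commutative quantale `V`. -/
def qhom (v w : V) : V := sSup {u | u * v ≤ w}

/-- `hX` is a `V`-category structure on `X`. -/
def IsVCat {X : Type*} (hX : X → X → V) : Prop :=
  (∀ x, 1 ≤ hX x x) ∧ (∀ x y z, hX x y * hX y z ≤ hX x z)

/-- A contravariant presheaf on the `V`-category `(X, hX)`. -/
def IsPsh {X : Type*} (hX : X → X → V) (φ : X → V) : Prop :=
  ∀ x y, hX x y * φ y ≤ φ x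

/-- `DX hX`: the set of all contravariant presheaves on `(X, hX)`. -/
def DX {X : Type*} (hX : X → X → V) := {φ : X → V // IsPsh hX φ}

/-- The hom of the presheaf `V`-category, on underlying functions:
`pshHom φ ψ = ⨅ x, [φ x, ψ x]`. -/
def pshHom {X : Type*} (φ ψ : X → V) : V := ⨅ x, qhom (φ x) (ψ x)

/-- The hom of the presheaf `V`-category `DX hX`. -/
def DHom {X : Type*} (hX : X → X → V) (φ ψ : DX hX) : V := pshHom φ.1 ψ.1

/-- The Yoneda embedding `y_X(x) = X(·,x)`. -/
def yoneda {X : Type*} (hX : X → X → V) (h : IsVCat hX) (x : X) : DX hX :=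
  ⟨fun x' => hX x' x, fun a b => h.2 a b x⟩

theorem le_qhom_iff (u v w : V) : u ≤ qhom v w ↔ u * v ≤ w := by
  constructor
  · intro h
    refine (mul_le_mul_left h v).trans ?_
    rw [qhom, IsQuantale.sSup_mul_distrib]
    exact iSup₂_le fun _ hu => hu
  · exact fun h => le_sSup h

theorem le_pshHom_iff {X : Type*} (u : V) (φ ψ : X → V) :
    u ≤ pshHom φ ψ ↔ ∀ x, u * φ x ≤ ψ x := by
  simp only [pshHom, le_iInf_iff, le_qhom_iff]

theorem pshHom_mul_le {X : Type*} (φ ψ : X → V) (x : X) : pshHom φ ψ * φ x ≤ ψ x :=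
  (le_pshHom_iff _ φ ψ).1 le_rfl x

theorem isVCat_DHom {X : Type*} (hX : X → X → V) : IsVCat (DHom hX) := by
  refine ⟨fun φ => (le_pshHom_iff _ _ _).2 fun x => (one_mul _).le,
    fun φ ψ χ => (le_pshHom_iff _ _ _).2 fun x => ?_⟩
  calc DHom hX φ ψ * DHom hX ψ χ * φ.1 x
      = DHom hX ψ χ * (DHom hX φ ψ * φ.1 x) := by rw [mul_comm (DHom hX φ ψ), mul_assoc]
    _ ≤ DHom hX ψ χ * ψ.1 x := mul_le_mul_right (pshHom_mul_le φ.1 ψ.1 x) _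
    _ ≤ χ.1 x := pshHom_mul_le ψ.1 χ.1 x

/-- The Yoneda lemma. -/
theorem DHom_yoneda {X : Type*} (hX : X → X → V) (hcat : IsVCat hX) (x : X) (ψ : DX hX) :
    DHom hX (yoneda hX hcat x) ψ = ψ.1 x := by
  apply le_antisymm
  · calc DHom hX (yoneda hX hcat x) ψ
        = DHom hX (yoneda hX hcat x) ψ * 1 := (mul_one _).symm
      _ ≤ DHom hX (yoneda hX hcat x) ψ * hX x x := mul_le_mul_right (hcat.1 x) _
      _ ≤ ψ.1 x := pshHom_mul_le (yoneda hX hcat x).1 ψ.1 x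
  · refine (le_pshHom_iff _ _ _).2 fun z => ?_
    rw [mul_comm]
    exact ψ.2 z x

/-- With `μ_X(Φ)(x) := Φ(y_X x)` and `(D y_X)(φ)(ψ) := ⨆ x, DX(ψ, y_X x) ⊗ φ(x)`:
`μ_X(Φ)` and `(D y_X)(φ)` are again presheaves, and
(i) `D(DX)((D y_X)(φ), Φ) = DX(φ, μ_X(Φ))`, (ii) `DX(μ_X(Φ), φ) = D(DX)(Φ, y_{DX}(φ))`;
so `D y_X ⊣ μ_X ⊣ y_{DX}` is an adjoint string. -/
theorem stmt1 {X : Type*} (hX : X → X → V) (hcat : IsVCat hX) :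
    -- μ_X(Φ) is a presheaf on X
    (∀ Φ : DX hX → V, IsPsh (DHom hX) Φ →
        IsPsh hX (fun x => Φ (yoneda hX hcat x))) ∧
    -- (D y_X)(φ) is a presheaf on DX
    (∀ φ : DX hX,
        IsPsh (DHom hX) (fun ψ : DX hX => ⨆ x, DHom hX ψ (yoneda hX hcat x) * φ.1 x)) ∧
    -- (i)  D(DX)((D y_X)(φ), Φ) = DX(φ, μ_X(Φ))
    (∀ (φ : DX hX) (Φ : DX hX → V), IsPsh (DHom hX) Φ →
        pshHom (fun ψ : DX hX => ⨆ x, DHom hX ψ (yoneda hX hcat x) * φ.1 x) Φ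
          = pshHom φ.1 (fun x => Φ (yoneda hX hcat x))) ∧
    -- (ii) DX(μ_X(Φ), φ) = D(DX)(Φ, y_{DX}(φ))
    (∀ (φ : DX hX) (Φ : DX hX → V), IsPsh (DHom hX) Φ →
        pshHom (fun x => Φ (yoneda hX hcat x)) φ.1
          = pshHom Φ (fun ψ : DX hX => DHom hX ψ φ)) := by
  refine ⟨fun Φ hΦ x z => ?_, fun φ ψ χ => ?_, fun φ Φ hΦ => ?_, fun φ Φ hΦ => ?_⟩
  · have h := hΦ (yoneda hX hcat x) (yoneda hX hcat z)
    rwa [DHom_yoneda] at h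
  · rw [Quantale.mul_iSup_distrib]
    refine iSup_mono fun x => ?_
    rw [← mul_assoc]
    exact mul_le_mul_left ((isVCat_DHom hX).2 ψ χ _) _
  · refine eq_of_forall_le_iff fun u => ?_
    simp only [le_pshHom_iff, Quantale.mul_iSup_distrib, iSup_le_iff]
    constructor
    · intro h x
      refine le_trans (mul_le_mul_right ?_ u) (h (yoneda hX hcat x) x)
      calc φ.1 x = 1 * φ.1 x := (one_mul _).symm
        _ ≤ _ := mul_le_mul_left ((isVCat_DHom hX).1 (yoneda hX hcat x)) _
    · intro h ψ x
      rw [mul_left_comm]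
      exact (mul_le_mul_right (h x) _).trans (hΦ ψ (yoneda hX hcat x))
  · refine eq_of_forall_le_iff fun u => ?_
    simp only [le_pshHom_iff]
    constructor
    · intro h ψ
      refine (le_pshHom_iff _ _ _).2 fun x => ?_
      have hy := hΦ (yoneda hX hcat x) ψ
      rw [DHom_yoneda, mul_comm] at hy
      rw [mul_assoc]
      exact (mul_le_mul_right hy u).trans (h x)
    · intro h x
      exact (h (yoneda hX hcat x)).trans_eq (DHom_yoneda hX hcat x φ)
end

section
/- Let A and B be separated cocomplete V-categories, φ ∈ DA and ψ ∈ DB. Then for every G-ideal ξ on A ⊗ B: ⨅_{a,b} [φ(a) ⊗ ψ(b), ξ(a,b)] = ⨅_{a,b} [A(a, sup_A φ) ⊗ B(b, sup_B ψ), ξ(a,b)]. (The presheaf d₂(φ,ψ)(a,b) = φ(a) ⊗ ψ(b) and the representable presheaf at (sup_A φ, sup_B ψ) have the same hom into every G-ideal, hence the same reflection into A ⊗_V B; this is the commutativity i ∘ (sup_A ⊗ sup_B) = q ∘ d₂.) -/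
/-! The G-ideal condition evaluates the left-hand side to `ξ (sup φ) (sup ψ)`. By the Yoneda lemma
for presheaves on `A ⊗ B` (`iInf_qhom_representable`), the hom from the representable presheaf at
`(sup φ, sup ψ)` into `ξ` has the same value. -/

/- `V` is a commutative quantale: a complete lattice with a commutative monoid
structure `(*, 1)` distributing over arbitrary suprema. -/
variable {V : Type*} [CommMonoid V] [CompleteLattice V] [IsQuantale V]

/-- A separated cocomplete `V`-category: a `V`-category whose underlying order is
antisymmetric, equipped with `sup : DA → A` satisfying
`A(sup φ, a) = ⨅ a', [φ(a'), A(a',a)]`. -/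
structure SupCat (V : Type*) [CommMonoid V] [CompleteLattice V] [IsQuantale V] where
  carrier : Type*
  hom : carrier → carrier → V
  refl : ∀ x, 1 ≤ hom x x
  trans : ∀ x y z, hom x y * hom y z ≤ hom x z
  separated : ∀ x y, 1 ≤ hom x y → 1 ≤ hom y x → x = y
  sup : {φ : carrier → V // ∀ x y, hom x y * φ y ≤ φ x} → carrier
  hom_sup : ∀ (φ : {φ : carrier → V // ∀ x y, hom x y * φ y ≤ φ x}) (a : carrier),
      hom (sup φ) a = ⨅ a', qhom (φ.1 a') (hom a' a)

/-- The set of contravariant presheaves on a separated cocomplete `V`-category. -/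
abbrev PSh (A : SupCat V) := {φ : A.carrier → V // ∀ x y, A.hom x y * φ y ≤ φ x}

/-- A G-ideal on `A ⊗ B`: a presheaf `ξ` on the tensor product `V`-category `A ⊗ B`
such that `⨅_{a,b} [φ(a) ⊗ ψ(b), ξ(a,b)] = ξ(sup_A φ, sup_B ψ)` for all presheaves
`φ` on `A` and `ψ` on `B`. -/
def IsGIdeal (A B : SupCat V) (ξ : A.carrier → B.carrier → V) : Prop :=
  (∀ a a' b b', A.hom a a' * B.hom b b' * ξ a' b' ≤ ξ a b) ∧
  (∀ (φ : PSh A) (ψ : PSh B),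
      (⨅ a, ⨅ b, qhom (φ.1 a * ψ.1 b) (ξ a b)) = ξ (A.sup φ) (B.sup ψ))

/-- The Yoneda lemma for presheaves on `A ⊗ B`. -/
theorem iInf_qhom_representable (A B : SupCat V) (ξ : A.carrier → B.carrier → V)
    (hξ : ∀ a a' b b', A.hom a a' * B.hom b b' * ξ a' b' ≤ ξ a b)
    (s : A.carrier) (t : B.carrier) :
    (⨅ a, ⨅ b, qhom (A.hom a s * B.hom b t) (ξ a b)) = ξ s t := by
  apply le_antisymm
  · set r := ⨅ a, ⨅ b, qhom (A.hom a s * B.hom b t) (ξ a b)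
    have h : r * (A.hom s s * B.hom t t) ≤ ξ s t :=
      (le_qhom_iff _ _ _).1 ((iInf_le _ s).trans (iInf_le _ t))
    calc r = r * (1 * 1) := by simp
      _ ≤ r * (A.hom s s * B.hom t t) :=
        mul_le_mul_right (mul_le_mul' (A.refl s) (B.refl t)) r
      _ ≤ ξ s t := h
  · refine le_iInf₂ fun a b => (le_qhom_iff _ _ _).2 ?_
    rw [mul_comm]
    exact hξ a s b t

/-- The presheaf `d₂(φ,ψ)` and the representable presheaf at
`(sup_A φ, sup_B ψ)` have the same hom into every G-ideal. -/
theorem stmt5 (A B : SupCat V) (ξ : A.carrier → B.carrier → V)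
    (hξ : IsGIdeal A B ξ) (φ : PSh A) (ψ : PSh B) :
    (⨅ a, ⨅ b, qhom (φ.1 a * ψ.1 b) (ξ a b))
      = ⨅ a, ⨅ b, qhom (A.hom a (A.sup φ) * B.hom b (B.sup ψ)) (ξ a b) := by
  rw [hξ.2 φ ψ, iInf_qhom_representable A B ξ hξ.1]
end

section
/- Let A and B be separated cocomplete V-categories. The set of G-ideals on A ⊗ B is closed under arbitrary pointwise infima and under pointwise cotensors (for every v ∈ V and G-ideal ξ, the map (a,b) ↦ [v, ξ(a,b)] is again a G-ideal), and the constantly-⊤ presheaf is a G-ideal. Consequently every presheaf θ on A ⊗ B has a least G-ideal q(θ) above it in the pointwise order, and this reflection is V-enriched: ⨅_{a,b} [θ(a,b), ξ(a,b)] = ⨅_{a,b} [q(θ)(a,b), ξ(a,b)] for every G-ideal ξ. Hence A ⊗_V B is a reflective sub-V-category of D(A ⊗ B), and it is itself a separated cocomplete V-category with sup_{A⊗_VB}(Φ) := q((a,b) ↦ ⨆_{ξ G-ideal} Φ(ξ) ⊗ ξ(a,b)) for presheaves Φ on A ⊗_V B. -/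
/-!
Everything follows from the adjunction `u * v ≤ w ↔ u ≤ [v, w]`. Testing the defining equation of a
G-ideal `ξ` against an arbitrary lower bound `u` turns it into
`(∀ a b, u * (φ a * ψ b) ≤ ξ a b) ↔ u ≤ ξ (sup φ) (sup ψ)` (`isGIdeal_iff`). Both sides commute with
infima in `ξ`, and replacing `ξ` by `[v, ξ]` amounts to replacing `u` by `u * v`, so G-ideals are
closed under pointwise infima and cotensors.

Hence `qRefl θ`, an infimum of G-ideals, is the least G-ideal above `θ`. The reflection is enriched
because `u ≤ ⨅ [θ, ξ]` says that the G-ideal `[u, ξ]` lies above `θ`, which is the same as lying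
above `qRefl θ` (`iInf_qhom_qRefl`). The formula for suprema in `A ⊗_V B` is the enriched reflection
applied to `⨆ ξ, Φ ξ * ξ`, since `[-, w]` turns suprema into infima.
-/

/- `V` is a commutative quantale: a complete lattice with a commutative monoid
structure `(*, 1)` distributing over arbitrary suprema. -/
variable {V : Type*} [CommMonoid V] [CompleteLattice V] [IsQuantale V]

/-- The pointwise infimum of all G-ideals above `θ` (the reflection of `θ`
into the tensor product `A ⊗_V B`). -/
def qRefl (A B : SupCat V) (θ : A.carrier → B.carrier → V) :
    A.carrier → B.carrier → V :=
  fun a b => ⨅ ζ ∈ {ζ : A.carrier → B.carrier → V |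
      IsGIdeal A B ζ ∧ ∀ a' b', θ a' b' ≤ ζ a' b'}, ζ a b

/-- The tensor product `A ⊗_V B`: the set of all G-ideals on `A ⊗ B`. -/
def GIdT (A B : SupCat V) := {ξ : A.carrier → B.carrier → V // IsGIdeal A B ξ}

/-- The hom of the `V`-category `A ⊗_V B`. -/
def tHom (A B : SupCat V) (ξ ζ : GIdT A B) : V :=
  ⨅ a, ⨅ b, qhom (ξ.1 a b) (ζ.1 a b)

/-- The universal map `i : A ⊗ B → A ⊗_V B`: the least G-ideal above the
representable presheaf at `(a₀, b₀)`. -/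
def iTensor (A B : SupCat V) (a₀ : A.carrier) (b₀ : B.carrier) :
    A.carrier → B.carrier → V :=
  qRefl A B (fun a b => A.hom a a₀ * B.hom b b₀)

theorem le_qhom {u v w : V} : u ≤ qhom v w ↔ u * v ≤ w := by
  constructor
  · intro h
    refine (mul_le_mul_left h v).trans ?_
    rw [qhom, IsQuantale.sSup_mul_distrib]
    exact iSup₂_le fun _ hx => hx
  · exact fun h => le_sSup h

theorem le_iInf_qhom {α β : Type*} {u : V} {θ ξ : α → β → V} :
    (u ≤ ⨅ a, ⨅ b, qhom (θ a b) (ξ a b)) ↔ ∀ a b, u * θ a b ≤ ξ a b := by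
  simp only [le_iInf_iff, le_qhom]

/-- The G-ideal condition with its defining equation tested against lower bounds `u`. -/
theorem isGIdeal_iff {A B : SupCat V} {ξ : A.carrier → B.carrier → V} :
    IsGIdeal A B ξ ↔
      (∀ a a' b b', A.hom a a' * B.hom b b' * ξ a' b' ≤ ξ a b) ∧
      ∀ (φ : PSh A) (ψ : PSh B) (u : V),
        (∀ a b, u * (φ.1 a * ψ.1 b) ≤ ξ a b) ↔ u ≤ ξ (A.sup φ) (B.sup ψ) := by
  refine and_congr_right fun _ => forall₂_congr fun φ ψ => ?_
  simp only [← le_iInf_qhom]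
  exact ⟨fun h u => by rw [h], eq_of_forall_le_iff⟩

theorem IsGIdeal.iInf {A B : SupCat V} {S : Set (A.carrier → B.carrier → V)}
    (hS : ∀ ζ ∈ S, IsGIdeal A B ζ) : IsGIdeal A B (fun a b => ⨅ ζ ∈ S, ζ a b) := by
  rw [isGIdeal_iff]
  refine ⟨fun a a' b b' => le_iInf₂ fun ζ hζ => ?_, fun φ ψ u => ?_⟩
  · exact (mul_le_mul_right (iInf₂_le ζ hζ) _).trans ((hS ζ hζ).1 a a' b b')
  · simp only [le_iInf_iff]
    exact ⟨fun h ζ hζ => ((isGIdeal_iff.1 (hS ζ hζ)).2 φ ψ u).1 fun a b => h a b ζ hζ,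
      fun h a b ζ hζ => ((isGIdeal_iff.1 (hS ζ hζ)).2 φ ψ u).2 (h ζ hζ) a b⟩

theorem IsGIdeal.cotensor {A B : SupCat V} {ξ : A.carrier → B.carrier → V}
    (hξ : IsGIdeal A B ξ) (v : V) : IsGIdeal A B (fun a b => qhom v (ξ a b)) := by
  rw [isGIdeal_iff]
  refine ⟨fun a a' b b' => ?_, fun φ ψ u => ?_⟩
  · rw [le_qhom, mul_assoc]
    exact (mul_le_mul_right (le_qhom.1 le_rfl) _).trans (hξ.1 a a' b b')
  · simp only [le_qhom]
    rw [← (isGIdeal_iff.1 hξ).2 φ ψ (u * v)]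
    simp only [mul_right_comm u v]

theorem isGIdeal_top (A B : SupCat V) : IsGIdeal A B (fun _ _ => (⊤ : V)) :=
  isGIdeal_iff.2 ⟨fun _ _ _ _ => le_top, fun _ _ _ => ⟨fun _ => le_top, fun _ _ _ => le_top⟩⟩

theorem isGIdeal_qRefl {A B : SupCat V} (θ : A.carrier → B.carrier → V) :
    IsGIdeal A B (qRefl A B θ) :=
  IsGIdeal.iInf fun _ hζ => hζ.1

theorem le_qRefl {A B : SupCat V} (θ : A.carrier → B.carrier → V) (a : A.carrier)
    (b : B.carrier) : θ a b ≤ qRefl A B θ a b :=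
  le_iInf₂ fun _ hζ => hζ.2 a b

theorem qRefl_le {A B : SupCat V} {θ ξ : A.carrier → B.carrier → V} (hξ : IsGIdeal A B ξ)
    (h : ∀ a b, θ a b ≤ ξ a b) (a : A.carrier) (b : B.carrier) : qRefl A B θ a b ≤ ξ a b :=
  iInf₂_le ξ ⟨hξ, h⟩

/-- The reflection into G-ideals is `V`-enriched, because G-ideals are closed under cotensors. -/
theorem iInf_qhom_qRefl {A B : SupCat V} (θ : A.carrier → B.carrier → V)
    {ξ : A.carrier → B.carrier → V} (hξ : IsGIdeal A B ξ) :
    (⨅ a, ⨅ b, qhom (θ a b) (ξ a b)) = ⨅ a, ⨅ b, qhom (qRefl A B θ a b) (ξ a b) := by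
  refine eq_of_forall_le_iff fun u => ?_
  rw [le_iInf_qhom, le_iInf_qhom]
  constructor
  · intro h a b
    -- the cotensor `[u, ξ]` is a G-ideal above `θ`
    rw [mul_comm, ← le_qhom]
    exact qRefl_le (hξ.cotensor u) (fun a b => by rw [le_qhom, mul_comm]; exact h a b) a b
  · exact fun h a b => (mul_le_mul_right (le_qRefl θ a b) u).trans (h a b)

theorem tHom_sup {A B : SupCat V} (F : GIdT A B → V) {s : GIdT A B}
    (hs : s.1 = qRefl A B (fun a b => ⨆ ξ : GIdT A B, F ξ * ξ.1 a b)) (ζ : GIdT A B) :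
    tHom A B s ζ = ⨅ ξ : GIdT A B, qhom (F ξ) (tHom A B ξ ζ) := by
  rw [tHom, hs, ← iInf_qhom_qRefl _ ζ.2]
  refine eq_of_forall_le_iff fun u => ?_
  rw [le_iInf_qhom]
  simp only [le_iInf_iff, le_qhom, tHom, Quantale.mul_iSup_distrib, iSup_le_iff, mul_assoc]
  exact ⟨fun h ξ a b => h a b ξ, fun h a b ξ => h ξ a b⟩

theorem tHom_separated {A B : SupCat V} {ξ ζ : GIdT A B} (h₁ : 1 ≤ tHom A B ξ ζ)
    (h₂ : 1 ≤ tHom A B ζ ξ) : ξ = ζ := by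
  simp only [tHom, le_iInf_qhom, one_mul] at h₁ h₂
  exact Subtype.ext (funext₂ fun a b => le_antisymm (h₁ a b) (h₂ a b))

/-- G-ideals are closed under pointwise infima and pointwise cotensors,
the constantly-`⊤` presheaf is a G-ideal; every presheaf `θ` on `A ⊗ B` has a least
G-ideal `q(θ)` above it, the reflection is `V`-enriched, and `A ⊗_V B` is itself a
separated cocomplete `V`-category. -/
theorem stmt6 (A B : SupCat V) :
    -- closure under arbitrary pointwise infima
    (∀ S : Set (A.carrier → B.carrier → V), (∀ ζ ∈ S, IsGIdeal A B ζ) →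
        IsGIdeal A B (fun a b => ⨅ ζ ∈ S, ζ a b)) ∧
    -- closure under pointwise cotensors
    (∀ (v : V) (ξ : A.carrier → B.carrier → V), IsGIdeal A B ξ →
        IsGIdeal A B (fun a b => qhom v (ξ a b))) ∧
    -- the constantly-⊤ presheaf is a G-ideal
    IsGIdeal A B (fun _ _ => (⊤ : V)) ∧
    -- q(θ) is the least G-ideal above θ, and the reflection is V-enriched
    (∀ θ : A.carrier → B.carrier → V,
        (∀ a a' b b', A.hom a a' * B.hom b b' * θ a' b' ≤ θ a b) →
        IsGIdeal A B (qRefl A B θ) ∧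
        (∀ a b, θ a b ≤ qRefl A B θ a b) ∧
        (∀ ξ : A.carrier → B.carrier → V, IsGIdeal A B ξ →
            (∀ a b, θ a b ≤ ξ a b) → ∀ a b, qRefl A B θ a b ≤ ξ a b) ∧
        (∀ ξ : A.carrier → B.carrier → V, IsGIdeal A B ξ →
            (⨅ a, ⨅ b, qhom (θ a b) (ξ a b))
              = ⨅ a, ⨅ b, qhom (qRefl A B θ a b) (ξ a b))) ∧
    -- A ⊗_V B is cocomplete: sup_{A⊗B}(Φ) := q((a,b) ↦ ⨆_ξ Φ(ξ) ⊗ ξ(a,b))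
    (∀ (Φ : {F : GIdT A B → V // ∀ ξ ζ : GIdT A B, tHom A B ξ ζ * F ζ ≤ F ξ})
        (s : GIdT A B),
        s.1 = qRefl A B (fun a b => ⨆ ξ : GIdT A B, Φ.1 ξ * ξ.1 a b) →
        ∀ ζ : GIdT A B,
          tHom A B s ζ = ⨅ ξ : GIdT A B, qhom (Φ.1 ξ) (tHom A B ξ ζ)) ∧
    -- A ⊗_V B is separated
    (∀ ξ ζ : GIdT A B, 1 ≤ tHom A B ξ ζ → 1 ≤ tHom A B ζ ξ → ξ = ζ) := by
  exact ⟨fun _ hS => IsGIdeal.iInf hS, fun v _ hξ => hξ.cotensor v, isGIdeal_top A B,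
    fun θ _ => ⟨isGIdeal_qRefl θ, le_qRefl θ, fun _ hξ h => qRefl_le hξ h,
      fun _ hξ => iInf_qhom_qRefl θ hξ⟩,
    fun Φ _ hs => tHom_sup Φ.1 hs, fun _ _ => tHom_separated⟩
end

section
/- Let A, B, C be separated cocomplete V-categories and g : A ⊗ B → C a bimorphism. Then for every c ∈ C, the map (a,b) ↦ C(g(a,b), c) is a G-ideal on A ⊗ B. -/
/-!
Since `g` preserves suprema in each variable separately, `C(g(sup φ, sup ψ), c)` unfolds
first to `⨅ a, [φ a, C(g(a, sup ψ), c)]` and then to `⨅ a, [φ a, ⨅ b, [ψ b, C(g(a,b), c)]]`.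
By the adjunction `le_qhom_iff`, an element `u` lies below this iff `u * (φ a * ψ b) ≤ C(g(a,b), c)`
for all `a` and `b`, which is the condition for lying below `⨅ a, ⨅ b, [φ a * ψ b, C(g(a,b), c)]`.
The presheaf condition is functoriality of `g` followed by composition in `C`.
-/

/- `V` is a commutative quantale: a complete lattice with a commutative monoid
structure `(*, 1)` distributing over arbitrary suprema. -/
variable {V : Type*} [CommMonoid V] [CompleteLattice V] [IsQuantale V]

/-- A bimorphism `g : A ⊗ B → C`: a `V`-functor that is cocontinuous in each
variable separately. -/
def IsBimorphism (A B C : SupCat V) (g : A.carrier → B.carrier → C.carrier) : Prop :=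
  (∀ a a' b b', A.hom a a' * B.hom b b' ≤ C.hom (g a b) (g a' b')) ∧
  (∀ (φ : PSh A) (b : B.carrier) (c : C.carrier),
      C.hom (g (A.sup φ) b) c = ⨅ a, qhom (φ.1 a) (C.hom (g a b) c)) ∧
  (∀ (a : A.carrier) (ψ : PSh B) (c : C.carrier),
      C.hom (g a (B.sup ψ)) c = ⨅ b, qhom (ψ.1 b) (C.hom (g a b) c))

/-- For a bimorphism `g : A ⊗ B → C` and every `c ∈ C`, the map
`(a,b) ↦ C(g(a,b), c)` is a G-ideal on `A ⊗ B`. -/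
theorem stmt8 (A B C : SupCat V) (g : A.carrier → B.carrier → C.carrier)
    (hg : IsBimorphism A B C g) (c : C.carrier) :
    IsGIdeal A B (fun a b => C.hom (g a b) c) := by
  obtain ⟨hfun, hsupA, hsupB⟩ := hg
  refine ⟨fun a a' b b' => ?_, fun φ ψ => ?_⟩
  · exact (mul_le_mul_left (hfun a a' b b') _).trans (C.trans _ _ _)
  · refine eq_of_forall_le_iff fun u => ?_
    simp only [hsupA, hsupB, le_iInf_iff, le_qhom_iff, mul_assoc]
end

section
/- Let V = {⊥, e, a, ⊤} be the four-element Boolean algebra with atoms e and a (so ⊥ < e, a < ⊤ and e, a incomparable), made into a commutative quantale with unit e and multiplication determined by a ⊗ a = e, a ⊗ ⊤ = ⊤, ⊤ ⊗ ⊤ = ⊤, e acting as unit and ⊥ as absorbing element. Regard V as a V-category via V(v,w) := [v,w]; it is separated. Then the tensor product V ⊗ V of V-categories is not separated: the points (a,e) and (e,a) are distinct, yet e ≤ (V ⊗ V)((a,e),(e,a)) and e ≤ (V ⊗ V)((e,a),(a,e)), both homs being equal to [a,e] ⊗ [e,a] = a ⊗ a = e. Hence the tensor product in V-Cat of two separated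 V-categories need not be separated. -/
/-! `V4` is the powerset quantale of the two-element group `{e, a}`, so the quantale laws
reduce to propositional logic in each component. The explicit formula `vhom_eq` gives
`e ≤ [v,w] ↔ v ≤ w`, which is separatedness of `V4`, and `[a,e] = [e,a] = a`; as
`a ⊗ a = e`, the distinct points `(a,e)` and `(e,a)` of `V ⊗ V` have hom `e` in both
directions. -/

/-- The four-element Boolean algebra `{⊥, e, a, ⊤}` with atoms `e` and `a`,
realised as `Prop × Prop` (first component: "`e` below", second: "`a` below"),
so `⊥ = (False, False)`, `e = (True, False)`, `a = (False, True)`,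
`⊤ = (True, True)`; it carries the product complete lattice structure. -/
abbrev V4 := Prop × Prop

/-- The quantale multiplication determined by `a ⊗ a = e`, `a ⊗ ⊤ = ⊤`,
`⊤ ⊗ ⊤ = ⊤`, with `e` as unit and `⊥` absorbing (the powerset quantale of the
two-element group). -/
def vmul (x y : V4) : V4 :=
  ((x.1 ∧ y.1) ∨ (x.2 ∧ y.2), (x.1 ∧ y.2) ∨ (x.2 ∧ y.1))

/-- The unit `e`. -/
def vone : V4 := (True, False)

/-- The element `a`. -/
def va : V4 := (False, True)

/-- The internal hom `[v,w]` of the quantale `(V4, vmul, vone)`. -/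
def vhom (v w : V4) : V4 := sSup {u | vmul u v ≤ w}

/-- The hom of the tensor product `V ⊗ V` of `V` with itself as a `V`-category,
`(V ⊗ V)((v,v'),(w,w')) = [v,w] ⊗ [v',w']`. -/
def vthom (p q : V4 × V4) : V4 := vmul (vhom p.1 q.1) (vhom p.2 q.2)

/-- The internal hom is residuation componentwise: `e ≤ [v,w]` iff `v ≤ w`, and
`a ≤ [v,w]` iff `a ⊗ v ≤ w`, where `a ⊗ -` swaps the two components. -/
theorem vhom_eq (v w : V4) :
    vhom v w = ((v.1 → w.1) ∧ (v.2 → w.2), (v.2 → w.1) ∧ (v.1 → w.2)) := by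
  have h : {u | vmul u v ≤ w} =
      Set.Iic (((v.1 → w.1) ∧ (v.2 → w.2), (v.2 → w.1) ∧ (v.1 → w.2)) : V4) := by
    ext u
    simp only [vmul, Set.mem_ofPred_eq, Set.mem_Iic, Prod.le_def, le_Prop_eq]
    tauto
  rw [vhom, h, csSup_Iic]

theorem vmul_sSup (v : V4) (S : Set V4) : vmul v (sSup S) = ⨆ w ∈ S, vmul v w := by
  ext
  · simp only [vmul, Prod.fst_sSup, Prod.snd_sSup, Prod.fst_iSup, sSup_Prop_eq, iSup_Prop_eq]
    simp only [Set.mem_image, exists_prop, exists_exists_and_eq_and]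
    grind
  · simp only [vmul, Prod.fst_sSup, Prod.snd_sSup, Prod.snd_iSup, sSup_Prop_eq, iSup_Prop_eq]
    simp only [Set.mem_image, exists_prop, exists_exists_and_eq_and]
    grind

/-- `(V4, vmul, vone)` is a commutative quantale with the stated
multiplication table, it is separated as a `V4`-category via `[·,·]`, yet the tensor
product `V ⊗ V` of `V`-categories is not separated: `(a,e) ≠ (e,a)` while both homs
between them equal `[a,e] ⊗ [e,a] = a ⊗ a = e`. -/
theorem stmt18 :
    -- (V4, vmul, vone) is a commutative quantale
    (∀ x y : V4, vmul x y = vmul y x) ∧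
    (∀ x y z : V4, vmul (vmul x y) z = vmul x (vmul y z)) ∧
    (∀ x : V4, vmul vone x = x) ∧
    (∀ (v : V4) (S : Set V4), vmul v (sSup S) = ⨆ w ∈ S, vmul v w) ∧
    -- the multiplication table
    (vmul va va = vone ∧ vmul va ⊤ = ⊤ ∧ vmul (⊤ : V4) ⊤ = ⊤ ∧
      ∀ x : V4, vmul ⊥ x = ⊥) ∧
    -- V4 is separated as a V4-category with hom [·,·]
    (∀ v w : V4, vone ≤ vhom v w → vone ≤ vhom w v → v = w) ∧
    -- but V ⊗ V is not separated:
    ((va, vone) ≠ ((vone, va) : V4 × V4)) ∧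
    (vhom va vone = va ∧ vhom vone va = va ∧
      vthom (va, vone) (vone, va) = vone ∧ vthom (vone, va) (va, vone) = vone) ∧
    (vone ≤ vthom (va, vone) (vone, va) ∧ vone ≤ vthom (vone, va) (va, vone)) ∧
    ¬ (∀ p q : V4 × V4, vone ≤ vthom p q → vone ≤ vthom q p → p = q) := by
  have hne : (va, vone) ≠ ((vone, va) : V4 × V4) := by simp [va, vone]
  have h₁ : vhom va vone = va := by simp [vhom_eq, va, vone]
  have h₂ : vhom vone va = va := by simp [vhom_eq, va, vone]
  have haa : vmul va va = vone := by simp [vmul, va, vone]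
  have t₁ : vthom (va, vone) (vone, va) = vone := by simp only [vthom, h₁, h₂, haa]
  have t₂ : vthom (vone, va) (va, vone) = vone := by simp only [vthom, h₁, h₂, haa]
  refine ⟨fun x y => ?_, fun x y z => ?_, fun x => ?_, vmul_sSup,
    ⟨haa, ?_, ?_, fun x => ?_⟩, fun v w hvw hwv => ?_, hne, ⟨h₁, h₂, t₁, t₂⟩,
    ⟨t₁.ge, t₂.ge⟩, fun h => hne (h _ _ t₁.ge t₂.ge)⟩
  · ext <;> simp only [vmul] <;> tauto
  · ext <;> simp only [vmul] <;> tauto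
  · simp [vmul, vone]
  · simp [vmul, va, Prod.ext_iff]
  · simp [vmul, Prod.ext_iff]
  · simp [vmul, Prod.ext_iff]
  · simp only [vhom_eq, vone, Prod.le_def, le_Prop_eq] at hvw hwv
    ext <;> tauto
end
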